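/- Let Γ be a distance-regular graph with diameter D ≥ 2, valency k and intersection numbers a_1, c_2, and let t ≥ 3 be an integer. If Γ contains a t-claw but no (t+1)-claws, then t(t−1)(c_2 − 1) ≥ 2(t(a_1+1) − k); equivalently, c_2 ≥ 1 + 2(t − k/(a_1+1))(a_1+1)/(t(t−1)). -/

import Mathlib

/-!
Let `x` be the centre of a `t`-claw. For each leaf `y`, the closed neighbourhood of `y` inside the
neighbourhood of `x` has `a₁ + 1` elements. For two distinct leaves `y` and `z` these sets meet only
in common neighbours of `y` and `z` other than `x`, hence in at most `c₂ - 1` elements. Their union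
lies in the `k`-element neighbourhood of `x`, so the second Bonferroni inequality gives
`t (a₁ + 1) - (t choose 2) (c₂ - 1) ≤ k`.
-/

open SimpleGraph Finset

/-- `G` is a distance-regular graph with diameter `D` and intersection numbers
`b i` (number of neighbours of `y` at distance `i+1` from `x` when `dist x y = i`) and
`c i` (number of neighbours of `y` at distance `i-1` from `x` when `dist x y = i`). -/
def IsDRG {V : Type*} [Fintype V] (G : SimpleGraph V) (D : ℕ) (b c : ℕ → ℕ) : Prop :=
  G.Connected ∧
  (∃ x y : V, G.dist x y = D) ∧
  (∀ x y : V, G.dist x y ≤ D) ∧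
  c 0 = 0 ∧ c 1 = 1 ∧ b D = 0 ∧
  (∀ i ≤ D, ∀ x y : V, G.dist x y = i →
    {z : V | G.Adj y z ∧ G.dist x z = i - 1}.ncard = c i ∧
    {z : V | G.Adj y z ∧ G.dist x z = i + 1}.ncard = b i)

/-- `G` contains a `t`-claw: a vertex together with `t` pairwise nonadjacent neighbours
(an induced `K_{1,t}`). -/
def HasClaw {V : Type*} (G : SimpleGraph V) (t : ℕ) : Prop :=
  ∃ (x : V) (s : Finset V), s.card = t ∧ (∀ y ∈ s, G.Adj x y) ∧
    (s : Set V).Pairwise fun y z => ¬ G.Adj y z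

/-- `θ` is an eigenvalue of the (real) adjacency matrix of `G`. -/
def IsAdjEigenvalue {V : Type*} [Fintype V] (G : SimpleGraph V) [DecidableRel G.Adj]
    (θ : ℝ) : Prop :=
  ∃ v : V → ℝ, v ≠ 0 ∧ (G.adjMatrix ℝ).mulVec v = θ • v

/-- `G` contains an induced quadrangle: vertices `x, z₁, y, z₂` with
`dist x y = dist z₁ z₂ = 2` inducing a 4-cycle. -/
def HasQuadrangle {V : Type*} (G : SimpleGraph V) : Prop :=
  ∃ x z₁ y z₂ : V, G.dist x y = 2 ∧ G.dist z₁ z₂ = 2 ∧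
    G.Adj x z₁ ∧ G.Adj z₁ y ∧ G.Adj y z₂ ∧ G.Adj z₂ x

/-- The diameter-3 intersection array `{β₀,β₁,β₂; γ₁,γ₂,γ₃}`. -/
def arr3 (b c : ℕ → ℕ) (β₀ β₁ β₂ γ₁ γ₂ γ₃ : ℕ) : Prop :=
  b 0 = β₀ ∧ b 1 = β₁ ∧ b 2 = β₂ ∧ c 1 = γ₁ ∧ c 2 = γ₂ ∧ c 3 = γ₃

section Bonferroni

variable {ι α : Type*} [DecidableEq α]

theorem sum_card_eq_sum_card_filter_mem {s : Finset ι} {A : ι → Finset α} {u : Finset α}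
    (hA : ∀ i ∈ s, A i ⊆ u) : ∑ i ∈ s, #(A i) = ∑ x ∈ u, #{i ∈ s | x ∈ A i} :=
  calc ∑ i ∈ s, #(A i) = ∑ i ∈ s, #{x ∈ u | x ∈ A i} :=
        sum_congr rfl fun i hi => by rw [filter_mem_eq_inter, inter_eq_right.2 (hA i hi)]
    _ = ∑ x ∈ u, #{i ∈ s | x ∈ A i} :=
        sum_card_bipartiteAbove_eq_sum_card_bipartiteBelow fun i x => x ∈ A i

theorem card_filter_offDiag_mem_inter (s : Finset ι) (A : ι → Finset α) (x : α) :
    #{p ∈ s.offDiag | x ∈ A p.1 ∩ A p.2} =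
      #{i ∈ s | x ∈ A i} * #{i ∈ s | x ∈ A i} - #{i ∈ s | x ∈ A i} := by
  rw [← offDiag_card]
  congr 1
  ext p
  simp only [mem_filter, mem_offDiag, mem_inter]
  tauto

theorem two_mul_le_two_add_mul_self_sub (d : ℕ) : 2 * d ≤ 2 + (d * d - d) := by
  rcases d with _ | _ | d
  · simp
  · simp
  · rw [← Nat.mul_sub_one, add_tsub_cancel_right]
    nlinarith

/-- The second Bonferroni inequality, doubled so that the pairs may be taken ordered. -/
theorem two_mul_sum_card_le_two_mul_card_biUnion_add (s : Finset ι) (A : ι → Finset α) :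
    2 * ∑ i ∈ s, #(A i) ≤ 2 * #(s.biUnion A) + ∑ p ∈ s.offDiag, #(A p.1 ∩ A p.2) := by
  have hinter : ∀ p ∈ s.offDiag, A p.1 ∩ A p.2 ⊆ s.biUnion A := fun p hp =>
    inter_subset_left.trans (subset_biUnion_of_mem A (mem_offDiag.1 hp).1)
  calc 2 * ∑ i ∈ s, #(A i) = ∑ x ∈ s.biUnion A, 2 * #{i ∈ s | x ∈ A i} := by
        rw [sum_card_eq_sum_card_filter_mem fun i hi => subset_biUnion_of_mem A hi, mul_sum]
    _ ≤ ∑ x ∈ s.biUnion A, (2 + #{p ∈ s.offDiag | x ∈ A p.1 ∩ A p.2}) := by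
        gcongr with x
        rw [card_filter_offDiag_mem_inter]
        exact two_mul_le_two_add_mul_self_sub _
    _ = 2 * #(s.biUnion A) + ∑ p ∈ s.offDiag, #(A p.1 ∩ A p.2) := by
        rw [sum_add_distrib, sum_const, smul_eq_mul, mul_comm,
          sum_card_eq_sum_card_filter_mem hinter]

end Bonferroni

section LocalStructure

variable {V : Type*} {G : SimpleGraph V} {x y z : V}

theorem dist_eq_two_of_adj_of_adj (hxy : G.Adj x y) (hxz : G.Adj x z) (hne : y ≠ z)
    (hyz : ¬ G.Adj y z) : G.dist y z = 2 := by
  have hedist : G.edist y z = 2 := edist_eq_two_iff.2 ⟨hne, hyz, x, hxy.symm, hxz.symm⟩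
  rw [SimpleGraph.dist, hedist, ENat.toNat_ofNat]

variable [DecidableEq V] [G.LocallyFinite]

theorem filter_neighborFinset_dist_eq_one (x y : V) :
    {z ∈ G.neighborFinset y | G.dist x z = 1} = G.neighborFinset x ∩ G.neighborFinset y := by
  ext z
  simp [and_comm]

variable (G) in
/-- The closed neighbourhood of `y` in the local graph of `G` at `x`, the subgraph induced on the
neighbours of `x`. It is meant for adjacent `x` and `y`. -/
def localClosedNeighborFinset (x y : V) : Finset V :=
  insert y (G.neighborFinset x ∩ G.neighborFinset y)

theorem card_localClosedNeighborFinset (x y : V) :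
    #(localClosedNeighborFinset G x y) = #(G.neighborFinset x ∩ G.neighborFinset y) + 1 :=
  card_insert_of_notMem (by simp)

theorem localClosedNeighborFinset_subset (hxy : G.Adj x y) :
    localClosedNeighborFinset G x y ⊆ G.neighborFinset x :=
  insert_subset ((G.mem_neighborFinset x y).2 hxy) inter_subset_left

theorem card_localClosedNeighborFinset_inter_lt (hxy : G.Adj x y) (hxz : G.Adj x z)
    (hne : y ≠ z) (hyz : ¬ G.Adj y z) :
    #(localClosedNeighborFinset G x y ∩ localClosedNeighborFinset G x z) <
      #(G.neighborFinset y ∩ G.neighborFinset z) := by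
  have hx : x ∈ G.neighborFinset y ∩ G.neighborFinset z := by simp [hxy.symm, hxz.symm]
  have hx' : x ∉ localClosedNeighborFinset G x y ∩ localClosedNeighborFinset G x z := by
    simp [localClosedNeighborFinset, hxy.ne, hxz.ne]
  refine card_lt_card ((ssubset_iff_of_subset fun w => ?_).2 ⟨x, hx, hx'⟩)
  simp only [localClosedNeighborFinset, mem_inter, mem_insert, mem_neighborFinset]
  rintro ⟨rfl | ⟨-, hyw⟩, rfl | ⟨-, hzw⟩⟩
  · exact absurd rfl hne
  · exact absurd hzw.symm hyz
  · exact absurd hyw hyz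
  · exact ⟨hyw, hzw⟩

theorem two_mul_sub_degree_le_of_isIndepSet {s : Finset V} {a m : ℤ}
    (hadj : ∀ y ∈ s, G.Adj x y) (hind : G.IsIndepSet s)
    (ha : ∀ y ∈ s, a ≤ #(G.neighborFinset x ∩ G.neighborFinset y))
    (hm : (s : Set V).Pairwise fun y z => (#(G.neighborFinset y ∩ G.neighborFinset z) : ℤ) ≤ m) :
    2 * (#s * (a + 1) - G.degree x) ≤ #s * (#s - 1) * (m - 1) := by
  set A : V → Finset V := localClosedNeighborFinset G x
  have hunion : #(s.biUnion A) ≤ G.degree x :=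
    card_le_card (biUnion_subset.2 fun y hy => localClosedNeighborFinset_subset (hadj y hy))
  have hcard : #s * (a + 1) ≤ ∑ y ∈ s, (#(A y) : ℤ) := by
    rw [← nsmul_eq_mul]
    refine card_nsmul_le_sum s _ _ fun y hy => ?_
    rw [card_localClosedNeighborFinset, Nat.cast_add_one]
    exact add_le_add_left (ha y hy) 1
  have hinter : ∑ p ∈ s.offDiag, (#(A p.1 ∩ A p.2) : ℤ) ≤ #s.offDiag * (m - 1) := by
    rw [← nsmul_eq_mul]
    refine sum_le_card_nsmul _ _ _ fun p hp => ?_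
    obtain ⟨hy, hz, hne⟩ := mem_offDiag.1 hp
    have hlt := card_localClosedNeighborFinset_inter_lt (hadj _ hy) (hadj _ hz) hne
      (hind hy hz hne)
    exact Int.le_sub_one_of_lt ((Nat.cast_lt.2 hlt).trans_le (hm hy hz hne))
  have hoffDiag : (#s.offDiag : ℤ) = #s * (#s - 1) := by
    rw [offDiag_card, Nat.cast_sub (Nat.le_mul_self _), Nat.cast_mul, mul_sub_one]
  have hbonferroni := two_mul_sum_card_le_two_mul_card_biUnion_add s A
  zify at hbonferroni hunion
  rw [← hoffDiag]
  linarith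

end LocalStructure

namespace IsDRG

variable {V : Type*} [Fintype V] {G : SimpleGraph V} [G.LocallyFinite] {D : ℕ} {b c : ℕ → ℕ}

theorem card_filter_dist_eq_dist_sub_one (h : IsDRG G D b c) (x y : V) :
    #{z ∈ G.neighborFinset y | G.dist x z = G.dist x y - 1} = c (G.dist x y) := by
  obtain ⟨-, -, hD, -, -, -, hbc⟩ := h
  rw [← (hbc _ (hD x y) x y rfl).1, ← Set.ncard_coe_finset]
  simp

theorem card_filter_dist_eq_dist_add_one (h : IsDRG G D b c) (x y : V) :
    #{z ∈ G.neighborFinset y | G.dist x z = G.dist x y + 1} = b (G.dist x y) := by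
  obtain ⟨-, -, hD, -, -, -, hbc⟩ := h
  rw [← (hbc _ (hD x y) x y rfl).2, ← Set.ncard_coe_finset]
  simp

theorem degree_eq (h : IsDRG G D b c) (x : V) : G.degree x = b 0 := by
  have hb := h.card_filter_dist_eq_dist_add_one x x
  rwa [dist_self, zero_add, filter_true_of_mem fun z hz => by simpa using hz] at hb

theorem card_filter_dist_eq_dist_add (h : IsDRG G D b c) {x y : V} (hne : x ≠ y) :
    #{z ∈ G.neighborFinset y | G.dist x z = G.dist x y} + b (G.dist x y) + c (G.dist x y) =
      b 0 := by
  classical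
  have hpos : 0 < G.dist x y := h.1.pos_dist_of_ne hne
  have hdisj_ab : Disjoint {z ∈ G.neighborFinset y | G.dist x z = G.dist x y}
      {z ∈ G.neighborFinset y | G.dist x z = G.dist x y + 1} :=
    disjoint_filter.2 fun z _ => by omega
  have hdisj_c : Disjoint
      {z ∈ G.neighborFinset y | G.dist x z = G.dist x y ∨ G.dist x z = G.dist x y + 1}
      {z ∈ G.neighborFinset y | G.dist x z = G.dist x y - 1} :=
    disjoint_filter.2 fun z _ => by omega
  have hcover : ∀ z ∈ G.neighborFinset y,
      (G.dist x z = G.dist x y ∨ G.dist x z = G.dist x y + 1) ∨ G.dist x z = G.dist x y - 1 :=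
    fun z hz => or_assoc.2 ((G.mem_neighborFinset y z).1 hz).diff_dist_adj
  rw [← h.card_filter_dist_eq_dist_sub_one x y, ← h.card_filter_dist_eq_dist_add_one x y,
    ← card_union_of_disjoint hdisj_ab, ← filter_or, ← card_union_of_disjoint hdisj_c, ← filter_or,
    filter_true_of_mem hcover, card_neighborFinset_eq_degree, h.degree_eq]

theorem card_inter_neighborFinset_add_of_adj [DecidableEq V] (h : IsDRG G D b c) {x y : V}
    (hxy : G.Adj x y) :
    #(G.neighborFinset x ∩ G.neighborFinset y) + b 1 + c 1 = b 0 := by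
  have hcard := h.card_filter_dist_eq_dist_add hxy.ne
  rwa [dist_eq_one_iff_adj.2 hxy, filter_neighborFinset_dist_eq_one] at hcard

theorem card_inter_neighborFinset_of_dist_eq_two [DecidableEq V] (h : IsDRG G D b c) {x y : V}
    (hxy : G.dist x y = 2) : #(G.neighborFinset x ∩ G.neighborFinset y) = c 2 := by
  have hcard := h.card_filter_dist_eq_dist_sub_one x y
  rwa [hxy, filter_neighborFinset_dist_eq_one] at hcard

end IsDRG

theorem statement4_general {V : Type*} [Fintype V] (G : SimpleGraph V) (D : ℕ) (b c : ℕ → ℕ)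
    (t : ℕ) (hdrg : IsDRG G D b c) (hclaw : HasClaw G t) :
    2 * ((t : ℤ) * (((b 0 : ℤ) - b 1 - c 1) + 1) - (b 0 : ℤ)) ≤
      (t : ℤ) * ((t : ℤ) - 1) * ((c 2 : ℤ) - 1) := by
  classical
  obtain ⟨x, s, rfl, hadj, hind⟩ := hclaw
  rw [← hdrg.degree_eq x]
  refine two_mul_sub_degree_le_of_isIndepSet hadj hind (fun y hy => ?_)
    fun y hy z hz hne => ?_
  · have ha := hdrg.card_inter_neighborFinset_add_of_adj (hadj y hy)
    rw [hdrg.degree_eq x]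
    omega
  · have hdist := dist_eq_two_of_adj_of_adj (hadj y hy) (hadj z hz) hne (hind hy hz hne)
    exact_mod_cast (hdrg.card_inter_neighborFinset_of_dist_eq_two hdist).le

/-- a DRG with a `t`-claw but no `(t+1)`-claws (`t ≥ 3`) satisfies
`t(t-1)(c₂ - 1) ≥ 2(t(a₁+1) - k)` (here `a₁ = k - b₁ - c₁`). -/
theorem statement4 {V : Type*} [Fintype V] (G : SimpleGraph V) (D : ℕ) (b c : ℕ → ℕ)
    (t : ℕ) (hdrg : IsDRG G D b c) (hD : 2 ≤ D) (ht : 3 ≤ t)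
    (hclaw : HasClaw G t) (hclaw' : ¬ HasClaw G (t + 1)) :
    2 * ((t : ℤ) * (((b 0 : ℤ) - b 1 - c 1) + 1) - (b 0 : ℤ)) ≤
      (t : ℤ) * ((t : ℤ) - 1) * ((c 2 : ℤ) - 1) :=
  statement4_general G D b c t hdrg hclaw
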